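/- arXiv:2204.10311 — 2 statements merged into one kernel-verified Lean document; each statement's English description precedes it below -/
import Mathlib

section
/- Let p ≥ 5 be a prime and q = p^r with r ≥ 1, and let x ∈ F_q with x ≠ 0 and x ≠ 1. Then (1/(q(q−1))) · Σ_χ g(χ)·g(χ²)·g(χ̄³)·χ(−27/(4x)) = 1/q holds if and only if φ(3x(1−x)) = −1, i.e., if and only if 3x(1−x) is a nonsquare in F_q. Here the sum runs over all multiplicative characters χ of F_q. -/
open Finset

/-- Orthogonality relation for the group of complex multiplicative characters of a finite field. -/
theorem MulChar.sum_apply_eq_ite {F : Type*} [Field F] [Fintype F] [DecidableEq F]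
    [Fintype (MulChar F ℂ)] (b : F) :
    ∑ χ : MulChar F ℂ, χ b = if b = 1 then (Fintype.card F : ℂ) - 1 else 0 := by
  split_ifs with hb
  · have h : Fintype.card (MulChar F ℂ) = Fintype.card F - 1 := by
      rw [← Fintype.card_units, ← Nat.card_eq_fintype_card, ← Nat.card_eq_fintype_card]
      exact MulChar.card_eq_card_units_of_hasEnoughRootsOfUnity F ℂ
    simp [hb, h, Nat.cast_sub (Fintype.card_pos (α := F))]
  · obtain ⟨χ, hχ⟩ := MulChar.exists_apply_ne_one_of_hasEnoughRootsOfUnity F ℂ hb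
    refine eq_zero_of_mul_eq_self_left hχ ?_
    simp only [mul_sum, ← MulChar.mul_apply]
    exact Fintype.sum_bijective _ (Group.mulLeft_bijective χ) _ _ fun _ ↦ rfl

/-- The sum over all characters, rewritten as an additive character sum over the points of a
surface. -/
theorem sum_gaussSum_mul_gaussSum_sq_mul_gaussSum_inv_cube_eq_sum
    {F : Type*} [Field F] [Fintype F] [DecidableEq F] [Fintype (MulChar F ℂ)]
    (ψ : AddChar F ℂ) (a : F) :
    ∑ χ : MulChar F ℂ, gaussSum χ ψ * gaussSum (χ ^ 2) ψ * gaussSum (χ⁻¹ ^ 3) ψ * χ a =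
      ((Fintype.card F : ℂ) - 1) * ∑ w : F, ∑ v : F, ∑ u : F,
        if u * v ^ 2 * w⁻¹ ^ 3 * a = 1 then ψ (u + v + w) else 0 := by
  have h (χ : MulChar F ℂ) :
      gaussSum χ ψ * gaussSum (χ ^ 2) ψ * gaussSum (χ⁻¹ ^ 3) ψ * χ a =
        ∑ w : F, ∑ v : F, ∑ u : F, ψ (u + v + w) * χ (u * v ^ 2 * w⁻¹ ^ 3 * a) := by
    simp only [gaussSum, sum_mul, mul_sum]
    refine sum_congr rfl fun w _ ↦ sum_congr rfl fun v _ ↦ sum_congr rfl fun u _ ↦ ?_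
    rw [MulChar.pow_apply' _ two_ne_zero, MulChar.pow_apply' _ three_ne_zero,
      MulChar.inv_apply']
    simp only [map_mul, map_pow, AddChar.map_add_eq_mul]
    ring
  simp only [h]
  rw [sum_comm, mul_sum]
  refine sum_congr rfl fun w _ ↦ ?_
  rw [sum_comm, mul_sum]
  refine sum_congr rfl fun v _ ↦ ?_
  rw [sum_comm, mul_sum]
  refine sum_congr rfl fun u _ ↦ ?_
  rw [← mul_sum, MulChar.sum_apply_eq_ite]
  split_ifs <;> ring

/-- The sum over all characters counts the roots of a cubic polynomial. -/
theorem sum_gaussSum_mul_gaussSum_sq_mul_gaussSum_inv_cube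
    {F : Type*} [Field F] [Fintype F] [DecidableEq F] [Fintype (MulChar F ℂ)]
    {ψ : AddChar F ℂ} (hψ : ψ ≠ 1) {a : F} (ha : a ≠ 0) :
    ∑ χ : MulChar F ℂ, gaussSum χ ψ * gaussSum (χ ^ 2) ψ * gaussSum (χ⁻¹ ^ 3) ψ * χ a =
      ((Fintype.card F : ℂ) - 1) *
        (Fintype.card F * #{t : F | t ^ 2 * (1 + t) * a = -1} - ((Fintype.card F : ℂ) - 1)) := by
  rw [sum_gaussSum_mul_gaussSum_sq_mul_gaussSum_inv_cube_eq_sum]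
  congr 1
  let G (w : F) : ℂ := ∑ t : F, ∑ s : F, if s * t ^ 2 * a = 1 then ψ (w * (1 + s + t)) else 0
  have hG (w : F) : (∑ v : F, ∑ u : F,
      if u * v ^ 2 * w⁻¹ ^ 3 * a = 1 then ψ (u + v + w) else 0) =
        G w - if w = 0 then G w else 0 := by
    by_cases hw : w = 0
    · simp [hw]
    · rw [if_neg hw, sub_zero]
      symm
      refine Fintype.sum_equiv (Equiv.mulLeft₀ w hw) _ _ fun t ↦
        Fintype.sum_equiv (Equiv.mulLeft₀ w hw) _ _ fun s ↦ ?_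
      change _ = if w * s * (w * t) ^ 2 * w⁻¹ ^ 3 * a = 1 then ψ (w * s + w * t + w) else 0
      congr 2
      · field_simp
      · ring
  have hG0 : G 0 = (Fintype.card F : ℂ) - 1 := by
    have h (t : F) : (∑ s : F, if s * t ^ 2 * a = 1 then ψ (0 * (1 + s + t)) else 0) =
        1 - if t = 0 then 1 else 0 := by
      by_cases ht : t = 0
      · simp [ht]
      · have h' (s : F) : s * t ^ 2 * a = 1 ↔ s = (t ^ 2 * a)⁻¹ := by
          rw [mul_assoc, mul_eq_one_iff_eq_inv₀ (mul_ne_zero (pow_ne_zero 2 ht) ha)]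
        simp [h', ht]
    simp only [G, h]
    simp
  have hGsum : ∑ w, G w = Fintype.card F * #{t : F | t ^ 2 * (1 + t) * a = -1} := by
    simp only [G]
    rw [sum_comm, card_filter, Nat.cast_sum, mul_sum]
    refine sum_congr rfl fun t _ ↦ ?_
    rw [sum_comm]
    have h (s : F) : (∑ w, if s * t ^ 2 * a = 1 then ψ (w * (1 + s + t)) else 0) =
        if s = -(1 + t) then (if s * t ^ 2 * a = 1 then (Fintype.card F : ℂ) else 0) else 0 := by
      have h' : 1 + s + t = 0 ↔ s = -(1 + t) := by grind
      split_ifs <;> simp_all [AddChar.sum_mulShift _ (AddChar.IsPrimitive.of_ne_one hψ)]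
    simp only [h, sum_ite_eq', mem_univ, if_true]
    have h' : -(1 + t) * t ^ 2 * a = 1 ↔ t ^ 2 * (1 + t) * a = -1 := by grind
    simp only [h', Nat.cast_ite, Nat.cast_one, Nat.cast_zero, mul_ite, mul_one, mul_zero]
  simp only [hG, sum_sub_distrib, hGsum]
  simp [hG0]

/-- Fibres of the Chebyshev-type map `y ↦ y * (4 * y - 3) ^ 2`, which corresponds to tripling the
angle under `y = cos ^ 2 θ`. -/
theorem existsUnique_mul_four_mul_sub_three_sq_iff {F : Type*} [Field F] [Finite F]
    (h2 : (2 : F) ≠ 0) (h3 : (3 : F) ≠ 0) {x : F} (hx0 : x ≠ 0) (hx1 : x ≠ 1) :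
    (∃! y : F, y * (4 * y - 3) ^ 2 = x) ↔ ¬ IsSquare (3 * x * (1 - x)) := by
  have h4 : (4 : F) ≠ 0 := by rw [show (4 : F) = 2 * 2 by norm_num]; exact mul_ne_zero h2 h2
  let P (y : F) : F := y * (4 * y - 3) ^ 2
  have hP (y : F) : 3 * P y * (1 - P y) =
      3 * y * (1 - y) * ((4 * y - 3) * (4 * y - 1)) ^ 2 := by simp only [P]; ring
  have hsq {y : F} (hy0 : P y ≠ 0) (hy1 : P y ≠ 1)
      (hy : IsSquare (3 * P y * (1 - P y))) : IsSquare (3 * y * (1 - y)) := by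
    rw [hP] at hy
    have h : (4 * y - 3) * (4 * y - 1) ≠ 0 := by
      intro h
      have := hP y
      rw [h] at this
      grind
    have := hy.div (IsSquare.sq ((4 * y - 3) * (4 * y - 1)))
    rwa [mul_div_cancel_right₀ _ (pow_ne_zero 2 h)] at this
  have hinj {y z : F} (hy : ¬ IsSquare (3 * y * (1 - y))) (h : P y = P z) : y = z := by
    by_contra hne
    have h' : 16 * (y ^ 2 + y * z + z ^ 2) - 24 * (y + z) + 9 = 0 := by
      have : (y - z) * (16 * (y ^ 2 + y * z + z ^ 2) - 24 * (y + z) + 9) = 0 := by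
        simp only [P] at h; linear_combination h
      exact (mul_eq_zero.mp this).resolve_left (sub_ne_zero.mpr hne)
    refine hy ⟨(4 * z + 2 * y - 3) / 2, ?_⟩
    field_simp
    linear_combination -h'
  constructor
  · rintro ⟨y, hy, huniq⟩ hx
    have hyx : P y = x := hy
    obtain ⟨s, hs⟩ := hsq (hyx ▸ hx0) (hyx ▸ hx1) (hyx ▸ hx)
    have hroot (s : F) (hs : 3 * y * (1 - y) = s * s) : (3 - 2 * y + 2 * s) / 4 = y := by
      refine huniq _ ?_
      set z := (3 - 2 * y + 2 * s) / 4 with hz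
      have hzs : 4 * z + 2 * y - 3 = 2 * s := by rw [hz]; field_simp; ring
      have hzsq : (4 * z + 2 * y - 3) ^ 2 = 4 * (3 * y * (1 - y)) := by
        rw [hzs]; linear_combination -4 * hs
      linear_combination (z - y) * hzsq + hy
    have h₁ := hroot s hs
    have h₂ := hroot (-s) (by rw [hs]; ring)
    rw [div_eq_iff h4] at h₁ h₂
    have hs0 : s = 0 := by
      have : 4 * s = 0 := by linear_combination h₁ - h₂
      exact (mul_eq_zero.mp this).resolve_left h4
    have hx' : 3 * x * (1 - x) = 0 := by
      rw [← hyx, hP, hs, hs0]; ring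
    simp [h3, hx0, sub_eq_zero, hx1.symm] at hx'
  · intro hx
    let T := {y : F // ¬ IsSquare (3 * y * (1 - y))}
    have hT {y : F} (hy : ¬ IsSquare (3 * y * (1 - y))) :
        ¬ IsSquare (3 * P y * (1 - P y)) := by
      refine fun h ↦ hy (hsq ?_ ?_ h)
      · intro h0
        rcases mul_eq_zero.mp h0 with h | h
        · exact hy (by simp [h])
        · have : 4 * y - 3 = 0 := pow_eq_zero_iff two_ne_zero |>.mp h
          exact hy ⟨y, by linear_combination -y * this⟩
      · intro h1
        have : (y - 1) * (4 * y - 1) ^ 2 = 0 := by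
          simp only [P] at h1; linear_combination h1
        rcases mul_eq_zero.mp this with h | h
        · exact hy (by simp [sub_eq_zero.mp h])
        · have : 4 * y - 1 = 0 := pow_eq_zero_iff two_ne_zero |>.mp h
          exact hy ⟨3 * y, by linear_combination -3 * y * this⟩
    let f : T → T := fun y ↦ ⟨P y, hT y.2⟩
    have hf : Function.Injective f := fun y z h ↦
      Subtype.ext (hinj y.2 (congrArg Subtype.val h))
    obtain ⟨y, hy⟩ := Finite.surjective_of_injective hf ⟨x, hx⟩
    have hyx : P y = x := congrArg Subtype.val hy
    exact ⟨y, hyx, fun z hz ↦ (hinj y.2 (hyx.trans hz.symm)).symm⟩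

theorem stmt_4 (p r : ℕ) (hp : p.Prime) (hp5 : 5 ≤ p) (hr : 1 ≤ r)
    (F : Type) [Field F] [Fintype F] [DecidableEq F]
    (hF : Fintype.card F = p ^ r)
    [Fintype (MulChar F ℂ)]
    (ψ : AddChar F ℂ) (hψ : ψ ≠ 1)
    (x : F) (hx0 : x ≠ 0) (hx1 : x ≠ 1) :
    ((1 / ((Fintype.card F : ℂ) * ((Fintype.card F : ℂ) - 1))) *
      ∑ χ : MulChar F ℂ,
        gaussSum χ ψ * gaussSum (χ ^ 2) ψ * gaussSum (χ⁻¹ ^ 3) ψ * χ (-27 / (4 * x))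
    = 1 / (Fintype.card F : ℂ)) ↔ quadraticChar F (3 * x * (1 - x)) = -1 := by
  have hchar (n : ℕ) (hn : n.Prime) (hnp : n < p) : (n : F) ≠ 0 := by
    have : Fact p.Prime := ⟨hp⟩
    have : CharP F p := charP_of_card_eq_prime_pow hF
    rw [Ne, CharP.cast_eq_zero_iff F p, Nat.prime_dvd_prime_iff_eq hp hn]
    omega
  have h2 : (2 : F) ≠ 0 := mod_cast hchar 2 Nat.prime_two (by omega)
  have h3 : (3 : F) ≠ 0 := mod_cast hchar 3 Nat.prime_three (by omega)
  have hq : (Fintype.card F : ℂ) ≠ 0 := by simp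
  have hq1 : (Fintype.card F : ℂ) - 1 ≠ 0 := by
    rw [sub_ne_zero]
    exact_mod_cast (Fintype.one_lt_card (α := F)).ne'
  have h4 : (4 : F) ≠ 0 := by rw [show (4 : F) = 2 * 2 by norm_num]; exact mul_ne_zero h2 h2
  have h27 : (27 : F) ≠ 0 := by rw [show (27 : F) = 3 ^ 3 by norm_num]; exact pow_ne_zero 3 h3
  have ha : -27 / (4 * x) ≠ 0 := div_ne_zero (neg_ne_zero.mpr h27) (mul_ne_zero h4 hx0)
  have hcard : #{t : F | t ^ 2 * (1 + t) * (-27 / (4 * x)) = -1} =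
      #{y : F | y * (4 * y - 3) ^ 2 = x} := by
    refine card_bij' (fun t _ ↦ 3 * (1 + t) / 4) (fun y _ ↦ 4 * y / 3 - 1) ?_ ?_ ?_ ?_
    · intro t ht
      simp only [mem_filter, mem_univ, true_and] at ht ⊢
      field_simp at ht ⊢
      linear_combination -ht
    · intro y hy
      simp only [mem_filter, mem_univ, true_and] at hy ⊢
      field_simp
      linear_combination -108 * hy
    · intro t _
      field_simp
      ring
    · intro y _
      field_simp
      ring
  rw [quadraticChar_neg_one_iff_not_isSquare,
    ← existsUnique_mul_four_mul_sub_three_sq_iff h2 h3 hx0 hx1,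
    sum_gaussSum_mul_gaussSum_sq_mul_gaussSum_inv_cube hψ ha, hcard,
    Fintype.existsUnique_iff_card_one]
  generalize #{y : F | y * (4 * y - 3) ^ 2 = x} = N
  rw [← Nat.cast_inj (R := ℂ)]
  have hN : 1 / ((Fintype.card F : ℂ) * ((Fintype.card F : ℂ) - 1)) *
      (((Fintype.card F : ℂ) - 1) * (Fintype.card F * N - ((Fintype.card F : ℂ) - 1))) =
      N - 1 + 1 / (Fintype.card F : ℂ) := by
    field_simp
    ring
  rw [hN, Nat.cast_one, add_eq_right, sub_eq_zero]
end

section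
/- Let p be an odd prime and q = p^r with r ≥ 1, and let λ ∈ F_q with λ ≠ 0 and λ ≠ −1. Then (1/(q−1)) · Σ_χ χ(λ⁻¹)·J(χ̄φ, χ)³ = φ(λ+1)·( (Σ_{x ∈ F_q} φ((x−1)(x² − 1/(λ+1))))² − q ), where the first sum runs over all multiplicative characters χ of F_q and the inner sum runs over all x ∈ F_q. -/
namespace QuadraticCharSum

open Finset

lemma sum_comp_eq_sum_mul_card_fiber {F : Type*} [Fintype F] [DecidableEq F]
    (f : F → ℤ) (g : F → F) :
    ∑ x, f (g x) = ∑ w, f w * ∑ x, if g x = w then 1 else 0 := by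
  simp_rw [mul_sum]
  rw [sum_comm]
  simp

lemma sum_comp_affine {F : Type*} [Field F] [Fintype F] {a : F} (ha : a ≠ 0) (b : F) (f : F → ℤ) :
    ∑ x, f (a * x + b) = ∑ y, f y :=
  Fintype.sum_equiv ((Equiv.mulLeft₀ a ha).trans (Equiv.addRight b)) _ _ fun _ ↦ rfl

variable {F : Type*} [Field F] [Fintype F] [DecidableEq F]

lemma quadraticChar_sq_mul {a : F} (ha : a ≠ 0) (b : F) :
    quadraticChar F (a ^ 2 * b) = quadraticChar F b := by
  rw [map_mul, quadraticChar_sq_one' ha, one_mul]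

lemma quadraticChar_mul_self {a : F} (ha : a ≠ 0) :
    quadraticChar F a * quadraticChar F a = 1 := by
  rw [← sq, quadraticChar_sq_one ha]

lemma quadraticChar_four_mul (hF : ringChar F ≠ 2) (b : F) :
    quadraticChar F (4 * b) = quadraticChar F b := by
  rw [← quadraticChar_sq_mul (Ring.two_ne_zero hF) b]
  norm_num

lemma card_sq_eq (hF : ringChar F ≠ 2) (a : F) :
    (∑ x : F, if x ^ 2 = a then 1 else 0 : ℤ) = 1 + quadraticChar F a := by
  rw [add_comm, ← quadraticChar_card_sqrts hF a, sum_boole]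
  congr 2
  ext x
  simp

/-- The number of roots of a quadratic polynomial in terms of its discriminant. -/
lemma card_quadratic_roots (hF : ringChar F ≠ 2) {a : F} (ha : a ≠ 0) (b c : F) :
    (∑ x : F, if a * x ^ 2 + b * x + c = 0 then 1 else 0 : ℤ)
      = 1 + quadraticChar F (b ^ 2 - 4 * a * c) := by
  have h2 := Ring.two_ne_zero hF
  have h2a : 2 * a ≠ 0 := mul_ne_zero h2 ha
  rw [← card_sq_eq hF,
    ← sum_comp_affine h2a b fun y ↦ if y ^ 2 = b ^ 2 - 4 * a * c then 1 else 0]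
  refine sum_congr rfl fun x _ ↦ ?_
  have h4a : 4 * a ≠ 0 := by
    have := mul_ne_zero h2 h2a
    convert this using 1; ring
  congr 1
  rw [eq_iff_iff, ← sub_eq_zero (a := (2 * a * x + b) ^ 2),
    show (2 * a * x + b) ^ 2 - (b ^ 2 - 4 * a * c) = 4 * a * (a * x ^ 2 + b * x + c) by ring,
    mul_eq_zero, or_iff_right h4a]

lemma sum_quadraticChar_mul_sub (hF : ringChar F ≠ 2) {d : F} (hd : d ≠ 0) :
    ∑ s : F, quadraticChar F (s * (s - d)) = -1 := by
  have h : ∀ s : F, quadraticChar F (s * (s - d))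
      = quadraticChar F (-d * s⁻¹ + 1) - if s = 0 then 1 else 0 := by
    intro s
    by_cases hs : s = 0
    · simp [hs]
    · rw [if_neg hs, sub_zero, ← quadraticChar_sq_mul hs (-d * s⁻¹ + 1)]
      congr 1
      field_simp
      ring
  simp_rw [h, sum_sub_distrib]
  rw [Fintype.sum_equiv (Equiv.inv F) (fun s ↦ quadraticChar F (-d * s⁻¹ + 1))
      (fun t ↦ quadraticChar F (-d * t + 1)) (fun _ ↦ rfl),
    sum_comp_affine (neg_ne_zero.mpr hd) 1 (fun y ↦ quadraticChar F y), quadraticChar_sum_zero hF]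
  simp

lemma sum_quadraticChar_sq_sub (hF : ringChar F ≠ 2) (d : F) :
    ∑ y : F, quadraticChar F (y ^ 2 - d)
      = (if d = 0 then (Fintype.card F : ℤ) else 0) - 1 := by
  split_ifs with hd
  · subst hd
    have h : ∀ y : F, quadraticChar F (y ^ 2 - 0) = 1 - if y = 0 then 1 else 0 := by
      intro y
      by_cases hy : y = 0
      · simp [hy]
      · rw [sub_zero, quadraticChar_sq_one' hy, if_neg hy, sub_zero]
    simp_rw [h, sum_sub_distrib]
    simp
  · rw [sum_comp_eq_sum_mul_card_fiber (fun s ↦ quadraticChar F (s - d)) (fun y ↦ y ^ 2)]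
    simp_rw [card_sq_eq hF, mul_add, mul_one, sum_add_distrib]
    have h := sum_comp_affine (one_ne_zero (α := F)) (-d) (fun y ↦ quadraticChar F y)
    simp only [one_mul, ← sub_eq_add_neg] at h
    simp_rw [h, quadraticChar_sum_zero hF, zero_add, zero_sub, ← sum_quadraticChar_mul_sub hF hd,
      map_mul, mul_comm]

lemma sum_quadraticChar_quadratic (hF : ringChar F ≠ 2) {a : F} (ha : a ≠ 0) (b c : F) :
    ∑ x : F, quadraticChar F (a * x ^ 2 + b * x + c)
      = quadraticChar F a *
        ((if b ^ 2 - 4 * a * c = 0 then (Fintype.card F : ℤ) else 0) - 1) := by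
  have h2a : 2 * a ≠ 0 := mul_ne_zero (Ring.two_ne_zero hF) ha
  rw [← sum_quadraticChar_sq_sub hF,
    ← sum_comp_affine h2a b fun y ↦ quadraticChar F (y ^ 2 - (b ^ 2 - 4 * a * c)), mul_sum]
  refine sum_congr rfl fun x _ ↦ ?_
  rw [show (2 * a * x + b) ^ 2 - (b ^ 2 - 4 * a * c)
    = 4 * (a * (a * x ^ 2 + b * x + c)) by ring, quadraticChar_four_mul hF, map_mul,
    ← mul_assoc, quadraticChar_mul_self ha, one_mul]

/-- Change of variables from `(x, y)` to `(x + y, (x - 1) * (y - 1))`. -/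
lemma sum_sum_symmetric (hF : ringChar F ≠ 2) (h : F → F → ℤ) :
    ∑ x, ∑ y, h (x + y) ((x - 1) * (y - 1))
      = ∑ w, ∑ e, h e w * (1 + quadraticChar F ((e - 2) ^ 2 - 4 * w)) := by
  have h₁ : ∀ x : F, ∑ y, h (x + y) ((x - 1) * (y - 1)) = ∑ e, h e ((x - 1) * (e - x - 1)) :=
    fun x ↦ Fintype.sum_equiv (Equiv.addLeft x) _ _ fun y ↦ by simp
  simp_rw [h₁]
  rw [sum_comm, sum_comm (f := fun w e ↦ h e w * _)]
  refine sum_congr rfl fun e _ ↦ ?_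
  rw [sum_comp_eq_sum_mul_card_fiber (h e)]
  refine sum_congr rfl fun w _ ↦ ?_
  have := card_quadratic_roots hF (one_ne_zero (α := F)) (-e) (e - 1 + w)
  rw [show (e - 2) ^ 2 - 4 * w = (-e) ^ 2 - 4 * 1 * (e - 1 + w) by ring, ← this]
  congr 1
  refine sum_congr rfl fun x _ ↦ ?_
  congr 1
  rw [eq_iff_iff, ← sub_eq_zero, ← neg_eq_zero]
  ring_nf

/-- The Legendre family of character sums. -/
def legendreSum (m : F) : ℤ := ∑ a : F, quadraticChar F (a * (a + 1) * (a + m))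

lemma legendreSum_zero (hF : ringChar F ≠ 2) : legendreSum (0 : F) = -1 := by
  have h : ∀ a : F, quadraticChar F (a * (a + 1) * (a + 0))
      = quadraticChar F (a + 1) - if a = 0 then 1 else 0 := by
    intro a
    by_cases ha : a = 0
    · simp [ha]
    · rw [if_neg ha, sub_zero, ← quadraticChar_sq_mul ha (a + 1)]
      congr 1
      ring
  have h' := sum_comp_affine (one_ne_zero (α := F)) 1 (fun y ↦ quadraticChar F y)
  simp only [one_mul] at h'
  simp_rw [legendreSum, h, sum_sub_distrib, h', quadraticChar_sum_zero hF]
  simp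

lemma sum_legendreSum (hF : ringChar F ≠ 2) : ∑ m : F, legendreSum m = 0 := by
  simp_rw [legendreSum]
  rw [sum_comm]
  refine sum_eq_zero fun a _ ↦ ?_
  have h := sum_comp_affine (one_ne_zero (α := F)) a (fun y ↦ quadraticChar F y)
  simp_rw [map_mul _ (a * (a + 1)), ← mul_sum, add_comm a]
  simp only [one_mul] at h
  rw [h, quadraticChar_sum_zero hF, mul_zero]

/-- The fibre over `w` of the double sum: an elliptic character sum in terms of its cubic
resolvent. -/
lemma sum_quartic_eq (hF : ringChar F ≠ 2) {c : F} (hc1 : c ≠ 1) (w : F) :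
    ∑ e : F, quadraticChar F ((e - 2) ^ 2 - 4 * w) *
        quadraticChar F ((e + (w - (1 - c))) ^ 2 - c * e ^ 2)
      = ∑ t : F, quadraticChar F (t * (4 * w + t * (w - (1 - c)) ^ 2) * (1 + t * c))
        - quadraticChar F (1 - c) := by
  have h2 := Ring.two_ne_zero hF
  have hd : 1 - c ≠ 0 := sub_ne_zero.mpr hc1.symm
  set d := 1 - c with hd_def
  have hcd : c = 1 - d := by rw [hd_def]; ring
  set v := w - d with hv
  have h₁ : ∀ e : F, quadraticChar F ((e - 2) ^ 2 - 4 * w) *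
      quadraticChar F ((e + v) ^ 2 - c * e ^ 2)
      = ∑ t : F, quadraticChar F t *
        if (e - 2) ^ 2 - 4 * w = t * ((e + v) ^ 2 - c * e ^ 2) then 1 else 0 := by
    intro e
    generalize (e - 2) ^ 2 - 4 * w = P
    generalize (e + v) ^ 2 - c * e ^ 2 = Q
    by_cases hQ : Q = 0
    · simp_rw [hQ, mul_zero, ← sum_mul, quadraticChar_sum_zero hF, zero_mul, MulChar.map_zero,
        mul_zero]
    · have : ∀ t : F, P = t * Q ↔ P / Q = t := fun t ↦ by rw [div_eq_iff hQ]
      simp_rw [this]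
      simp only [mul_ite, mul_one, mul_zero, sum_ite_eq, mem_univ, if_true]
      rw [← map_mul, ← quadraticChar_sq_mul hQ (P / Q)]
      congr 1
      field_simp
  have h₂ : ∀ t : F,
      (∑ e : F, if (e - 2) ^ 2 - 4 * w = t * ((e + v) ^ 2 - c * e ^ 2) then 1 else 0 : ℤ)
      = 1 + quadraticChar F ((4 * w + t * v ^ 2) * (1 + t * c)) - if t = d⁻¹ then 1 else 0 := by
    intro t
    have h₃ : ∀ e : F, (e - 2) ^ 2 - 4 * w = t * ((e + v) ^ 2 - c * e ^ 2) ↔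
        (1 - t * d) * e ^ 2 + (2 * (-2 - t * v)) * e + (4 - 4 * w - t * v ^ 2) = 0 := by
      intro e
      rw [← sub_eq_zero, hcd]
      ring_nf
    simp_rw [h₃]
    have h₄ : (2 * (-2 - t * v)) ^ 2 - 4 * (1 - t * d) * (4 - 4 * w - t * v ^ 2)
        = 4 * ((4 * w + t * v ^ 2) * (1 + t * c)) := by
      rw [hcd, show w = v + d by rw [hv]; ring]
      ring
    by_cases ht : t = d⁻¹
    · have ht1 : 1 - t * d = 0 := by rw [ht, inv_mul_cancel₀ hd, sub_self]
      rw [if_pos ht, ← quadraticChar_four_mul hF, ← h₄, ht1]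
      by_cases hB : -2 - t * v = 0
      · have htv : t * v = -2 := by linear_combination -hB
        have hv2 : v = -2 * d := by linear_combination d * htv + v * ht1
        have hC : 4 - 4 * w - t * v ^ 2 = 4 := by
          rw [show w = v + d by rw [hv]; ring]
          linear_combination (-v) * htv - 2 * hv2
        have h4 : (4 : F) ≠ 0 := by
          convert mul_ne_zero h2 h2 using 1; norm_num
        simp [hB, hC, h4]
      · have h2B : 2 * (-2 - t * v) ≠ 0 := mul_ne_zero h2 hB
        have := sum_comp_affine h2B (4 - 4 * w - t * v ^ 2) (fun y ↦ if y = 0 then 1 else 0)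
        simp only [zero_mul, zero_add, mul_zero, sub_zero]
        rw [this, quadraticChar_sq_one' h2B]
        simp
    · have ha : 1 - t * d ≠ 0 := by
        intro h
        exact ht (eq_inv_of_mul_eq_one_left (by linear_combination -h))
      rw [card_quadratic_roots hF ha, h₄, quadraticChar_four_mul hF, if_neg ht, sub_zero]
  simp_rw [h₁]
  rw [sum_comm]
  simp_rw [← mul_sum, h₂, mul_sub, mul_add (quadraticChar F _), mul_one, sum_sub_distrib, sum_add_distrib]
  rw [quadraticChar_sum_zero hF, zero_add]
  congr 1
  · refine sum_congr rfl fun t _ ↦ ?_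
    rw [← map_mul, mul_assoc]
  · simp only [mul_ite, mul_one, mul_zero, sum_ite_eq', mem_univ, if_true]
    rw [← quadraticChar_sq_mul hd d⁻¹]
    congr 1
    field_simp

lemma sum_cubic_eq_legendreSum (hF : ringChar F ≠ 2) {c w : F} (hc0 : c ≠ 0) (hw : w ≠ 0)
    (v : F) :
    quadraticChar F w * ∑ t : F, quadraticChar F (t * (4 * w + t * v ^ 2) * (1 + t * c))
      = quadraticChar F c * legendreSum (v ^ 2 / (4 * w * c)) := by
  have h2 := Ring.two_ne_zero hF
  have h4 : (4 : F) ≠ 0 := by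
    convert mul_ne_zero h2 h2 using 1; norm_num
  by_cases hv : v = 0
  · have h := sum_quadraticChar_quadratic hF hc0 1 0
    simp only [hv, ne_eq, OfNat.ofNat_ne_zero, not_false_eq_true, zero_pow, zero_div, mul_zero,
      add_zero, legendreSum_zero hF]
    simp only [one_pow, mul_zero, sub_zero, one_ne_zero, if_false, zero_sub, add_zero] at h
    rw [← h, mul_sum]
    refine sum_congr rfl fun t _ ↦ ?_
    rw [← map_mul, show w * (t * (4 * w) * (1 + t * c)) = (2 * w) ^ 2 * (c * t ^ 2 + 1 * t) by ring,
      quadraticChar_sq_mul (mul_ne_zero h2 hw)]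
  · have hk : 4 * w / v ^ 2 ≠ 0 := div_ne_zero (mul_ne_zero h4 hw) (pow_ne_zero 2 hv)
    have hr : 2 * (2 * w) ^ 2 / v ^ 2 ≠ 0 :=
      div_ne_zero (mul_ne_zero h2 (pow_ne_zero 2 (mul_ne_zero h2 hw))) (pow_ne_zero 2 hv)
    rw [← sum_comp_affine hk 0 fun t ↦ quadraticChar F (t * (4 * w + t * v ^ 2) * (1 + t * c)),
      legendreSum, mul_sum, mul_sum]
    refine sum_congr rfl fun s _ ↦ ?_
    rw [← map_mul, ← map_mul, ← quadraticChar_sq_mul hr (c * _)]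
    congr 1
    field_simp
    ring

lemma card_legendre_fiber (hF : ringChar F ≠ 2) {c : F} (hc0 : c ≠ 0) (hc1 : c ≠ 1) (m : F) :
    (∑ w : F, if w ≠ 0 ∧ (w - (1 - c)) ^ 2 / (4 * w * c) = m then 1 else 0 : ℤ)
      = 1 + quadraticChar F (m * (m + (c⁻¹ - 1))) := by
  have h2 := Ring.two_ne_zero hF
  have h4 : (4 : F) ≠ 0 := by
    convert mul_ne_zero h2 h2 using 1; norm_num
  have hd : 1 - c ≠ 0 := sub_ne_zero.mpr hc1.symm
  have h4c : 4 * c ≠ 0 := mul_ne_zero h4 hc0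
  rw [← quadraticChar_sq_mul h4c,
    show (4 * c) ^ 2 * (m * (m + (c⁻¹ - 1)))
      = (-2 * (1 - c) - 4 * c * m) ^ 2 - 4 * 1 * (1 - c) ^ 2 by field_simp; ring,
    ← card_quadratic_roots hF one_ne_zero]
  refine sum_congr rfl fun w _ ↦ ?_
  congr 1
  rw [eq_iff_iff]
  by_cases hw : w = 0
  · simp [hw, hd]
  · rw [div_eq_iff (mul_ne_zero (mul_ne_zero h4 hw) hc0), ← sub_eq_zero, and_iff_right hw]
    ring_nf

lemma sum_quadraticChar_legendreSum (hF : ringChar F ≠ 2) {c : F} (hc0 : c ≠ 0) (hc1 : c ≠ 1) :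
    ∑ w : F, ∑ e : F, quadraticChar F w * quadraticChar F ((e + (w - (1 - c))) ^ 2 - c * e ^ 2)
        * quadraticChar F ((e - 2) ^ 2 - 4 * w)
      = quadraticChar F c * ∑ m : F, quadraticChar F (m * (m + (c⁻¹ - 1))) * legendreSum m := by
  have h₁ : ∀ w : F, ∑ e : F, quadraticChar F w *
        quadraticChar F ((e + (w - (1 - c))) ^ 2 - c * e ^ 2)
        * quadraticChar F ((e - 2) ^ 2 - 4 * w)
      = quadraticChar F c * (∑ m : F, legendreSum m *
          if w ≠ 0 ∧ (w - (1 - c)) ^ 2 / (4 * w * c) = m then 1 else 0)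
        - quadraticChar F (1 - c) * quadraticChar F w := by
    intro w
    by_cases hw : w = 0
    · simp [hw]
    · simp only [hw, ne_eq, not_false_eq_true, true_and, mul_ite, mul_one, mul_zero, sum_ite_eq,
        mem_univ, if_true]
      rw [← sum_cubic_eq_legendreSum hF hc0 hw, mul_comm (quadraticChar F (1 - c)), ← mul_sub,
        ← sum_quartic_eq hF hc1, mul_sum]
      exact sum_congr rfl fun e _ ↦ by ring
  simp_rw [h₁, sum_sub_distrib, ← mul_sum]
  rw [quadraticChar_sum_zero hF, mul_zero, sub_zero, sum_comm]
  simp_rw [← mul_sum, card_legendre_fiber hF hc0 hc1, mul_add, mul_one, sum_add_distrib]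
  rw [sum_legendreSum hF, zero_add]
  simp_rw [mul_comm]

lemma sum_quadraticChar_diagonal (hF : ringChar F ≠ 2) {c : F} (hc0 : c ≠ 0) (hc1 : c ≠ 1) :
    ∑ w : F, ∑ e : F, quadraticChar F w * quadraticChar F ((e + (w - (1 - c))) ^ 2 - c * e ^ 2)
      = Fintype.card F := by
  have h2 := Ring.two_ne_zero hF
  have h4 : (4 : F) ≠ 0 := by
    convert mul_ne_zero h2 h2 using 1; norm_num
  have hd : 1 - c ≠ 0 := sub_ne_zero.mpr hc1.symm
  have h₁ : ∀ w : F,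
      ∑ e : F, quadraticChar F w * quadraticChar F ((e + (w - (1 - c))) ^ 2 - c * e ^ 2)
      = (if w = 1 - c then (Fintype.card F : ℤ) else 0)
        - quadraticChar F (1 - c) * quadraticChar F w := by
    intro w
    rw [← mul_sum]
    have h₂ : ∀ e : F, (e + (w - (1 - c))) ^ 2 - c * e ^ 2
        = (1 - c) * e ^ 2 + (2 * (w - (1 - c))) * e + (w - (1 - c)) ^ 2 := fun e ↦ by ring
    have h₃ : (2 * (w - (1 - c))) ^ 2 - 4 * (1 - c) * (w - (1 - c)) ^ 2 = 0 ↔ w = 1 - c := by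
      rw [show (2 * (w - (1 - c))) ^ 2 - 4 * (1 - c) * (w - (1 - c)) ^ 2
        = 4 * c * (w - (1 - c)) ^ 2 by ring, mul_eq_zero, or_iff_right (mul_ne_zero h4 hc0),
        sq_eq_zero_iff, sub_eq_zero]
    simp_rw [h₂, sum_quadraticChar_quadratic hF hd, h₃]
    split_ifs with h
    · rw [h]
      linear_combination ((Fintype.card F : ℤ)) * quadraticChar_mul_self hd
    · ring
  simp_rw [h₁, sum_sub_distrib, ← mul_sum]
  rw [quadraticChar_sum_zero hF]
  simp

/-- A finite field analogue of Clausen's formula, in terms of quadratic character sums. -/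
lemma sq_sum_quadraticChar_eq (hF : ringChar F ≠ 2) {c : F} (hc0 : c ≠ 0) (hc1 : c ≠ 1) :
    (∑ x : F, quadraticChar F ((x - 1) * (x ^ 2 - c))) ^ 2
      = Fintype.card F +
        quadraticChar F c * ∑ m : F, quadraticChar F (m * (m + (c⁻¹ - 1))) * legendreSum m := by
  rw [← sum_quadraticChar_legendreSum hF hc0 hc1, ← sum_quadraticChar_diagonal hF hc0 hc1,
    ← sum_add_distrib]
  simp_rw [← sum_add_distrib]
  have h := sum_sum_symmetric hF fun e w ↦
    quadraticChar F w * quadraticChar F ((e + (w - (1 - c))) ^ 2 - c * e ^ 2)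
  simp_rw [mul_add, mul_one] at h
  rw [← h, sq, sum_mul_sum]
  refine sum_congr rfl fun x _ ↦ sum_congr rfl fun y _ ↦ ?_
  rw [← map_mul, ← map_mul]
  congr 1
  ring

/-- A quadratic character sum over the surface `a * b * t = l`. -/
lemma sum_surface_eq (l : F) (hl : l ≠ 0) :
    ∑ a : F, ∑ b : F, ∑ t : F, (if a * b * t = l then
        quadraticChar F ((1 + a) * (1 + b) * (1 + t)) else 0)
      = ∑ m : F, quadraticChar F (m * (m + l)) * legendreSum m := by
  have h₁ : ∀ a b : F, (∑ t : F, if a * b * t = l then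
        quadraticChar F ((1 + a) * (1 + b) * (1 + t)) else 0)
      = quadraticChar F ((1 + a) * (1 + b) * (a * b * (a * b + l))) := by
    intro a b
    by_cases hab : a * b = 0
    · simp [hab, hl.symm]
    · have : ∀ t : F, a * b * t = l ↔ t = l / (a * b) := fun t ↦ by
        rw [eq_div_iff hab, mul_comm]
      simp only [this, sum_ite_eq', mem_univ, if_true]
      rw [← quadraticChar_sq_mul hab]
      congr 1
      have ha := left_ne_zero_of_mul hab
      have hb := right_ne_zero_of_mul hab
      field_simp
  simp_rw [h₁, legendreSum, mul_sum]
  rw [sum_comm (s := univ (α := F)) (t := univ (α := F))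
    (f := fun m a ↦ quadraticChar F (m * (m + l)) * _)]
  refine sum_congr rfl fun a _ ↦ ?_
  by_cases ha : a = 0
  · simp [ha]
  · refine Fintype.sum_equiv (Equiv.mulLeft₀ a ha) _ _ fun b ↦ ?_
    rw [← map_mul, ← quadraticChar_sq_mul ha]
    congr 1
    simp only [Equiv.mulLeft₀_apply]
    ring

lemma sum_mulChar_apply [Fintype (MulChar F ℂ)] (a : F) :
    ∑ χ : MulChar F ℂ, χ a = if a = 1 then (Fintype.card F : ℂ) - 1 else 0 := by
  split_ifs with ha
  · have h := MulChar.card_eq_card_units_of_hasEnoughRootsOfUnity F ℂ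
    rw [Nat.card_eq_fintype_card, Nat.card_eq_fintype_card, Fintype.card_units] at h
    simp [ha, h, Nat.cast_sub Fintype.card_pos]
  · obtain ⟨χ, hχ⟩ := MulChar.exists_apply_ne_one_of_hasEnoughRootsOfUnity F ℂ ha
    refine eq_zero_of_mul_eq_self_left hχ ?_
    simp only [Finset.mul_sum, ← MulChar.mul_apply]
    exact Fintype.sum_bijective _ (Group.mulLeft_bijective χ) _ _ fun χ' ↦ rfl

lemma jacobiSum_inv_mul (χ ψ : MulChar F ℂ) :
    jacobiSum (χ⁻¹ * ψ) χ = ∑ t : F, χ t * ψ⁻¹ (1 + t) := by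
  refine Fintype.sum_equiv ((Equiv.inv F).trans (Equiv.subRight 1)) _ _ fun u ↦ ?_
  by_cases hu : u = 0
  · simp [hu, MulChar.map_zero]
  · simp only [Equiv.trans_apply, Equiv.inv_apply, Equiv.subRight_apply, add_sub_cancel,
      MulChar.mul_apply, MulChar.inv_apply', inv_inv]
    rw [mul_right_comm, ← map_mul, mul_sub, mul_one, inv_mul_cancel₀ hu]

lemma sum_mulChar_mul_cube [Fintype (MulChar F ℂ)] (f : F → ℂ) {l : F} (hl : l ≠ 0) :
    ∑ χ : MulChar F ℂ, χ l⁻¹ * (∑ t : F, χ t * f t) ^ 3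
      = ((Fintype.card F : ℂ) - 1) *
        ∑ a : F, ∑ b : F, ∑ t : F, if a * b * t = l then f a * f b * f t else 0 := by
  have h₁ : ∀ χ : MulChar F ℂ, χ l⁻¹ * (∑ t : F, χ t * f t) ^ 3
      = ∑ a : F, ∑ b : F, ∑ t : F, χ (l⁻¹ * (a * b * t)) * (f a * f b * f t) := by
    intro χ
    rw [pow_succ, sq, sum_mul_sum, sum_mul, mul_sum]
    refine sum_congr rfl fun a _ ↦ ?_
    rw [sum_mul, mul_sum]
    refine sum_congr rfl fun b _ ↦ ?_
    rw [mul_sum, mul_sum]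
    refine sum_congr rfl fun t _ ↦ ?_
    simp only [map_mul]
    ring
  simp_rw [h₁]
  rw [sum_comm, mul_sum]
  refine sum_congr rfl fun a _ ↦ ?_
  rw [sum_comm, mul_sum]
  refine sum_congr rfl fun b _ ↦ ?_
  rw [sum_comm, mul_sum]
  refine sum_congr rfl fun t _ ↦ ?_
  rw [← sum_mul, sum_mulChar_apply]
  simp only [inv_mul_eq_one₀ hl, eq_comm (a := l), ite_mul, zero_mul, mul_ite, mul_zero]

end QuadraticCharSum

open QuadraticCharSum in
theorem stmt_9 (p r : ℕ) (hp : p.Prime) (hp2 : p ≠ 2) (hr : 1 ≤ r)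
    (F : Type) [Field F] [Fintype F] [DecidableEq F]
    (hF : Fintype.card F = p ^ r)
    [Fintype (MulChar F ℂ)]
    (lam : F) (hlam0 : lam ≠ 0) (hlam1 : lam ≠ -1) :
    (1 / ((Fintype.card F : ℂ) - 1)) *
      ∑ χ : MulChar F ℂ,
        χ lam⁻¹ *
          (jacobiSum (χ⁻¹ * (quadraticChar F).ringHomComp (Int.castRingHom ℂ)) χ) ^ 3
    = ((quadraticChar F (lam + 1) : ℤ) : ℂ) *
        ((∑ x : F,
            ((quadraticChar F ((x - 1) * (x ^ 2 - 1 / (lam + 1))) : ℤ) : ℂ)) ^ 2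
          - (Fintype.card F : ℂ)) := by
  have hF2 : ringChar F ≠ 2 := by
    intro h
    have hodd : ¬ 2 ∣ Fintype.card F := by
      rw [hF]
      intro h2
      exact hp2 ((Nat.prime_dvd_prime_iff_eq Nat.prime_two hp).mp
        (Nat.prime_two.dvd_of_dvd_pow h2)).symm
    have := FiniteField.even_card_of_char_two h
    omega
  have hl : lam + 1 ≠ 0 := fun h ↦ hlam1 (eq_neg_of_add_eq_zero_left h)
  have hc0 : 1 / (lam + 1) ≠ 0 := one_div_ne_zero hl
  have hc1 : 1 / (lam + 1) ≠ 1 := by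
    rw [Ne, div_eq_one_iff_eq hl]
    intro h
    exact hlam0 (by linear_combination -h)
  have hcard : (Fintype.card F : ℂ) - 1 ≠ 0 := by
    rw [sub_ne_zero]
    exact_mod_cast Fintype.one_lt_card.ne'
  set ψ := (quadraticChar F).ringHomComp (Int.castRingHom ℂ)
  have hψinv : ψ⁻¹ = ψ := ((quadraticChar_isQuadratic F).comp _).inv
  have hψ_apply : ∀ a, ψ a = ((quadraticChar F a : ℤ) : ℂ) := fun a ↦ rfl
  simp_rw [jacobiSum_inv_mul, hψinv]
  rw [sum_mulChar_mul_cube (fun t ↦ ψ (1 + t)) hlam0, ← mul_assoc, one_div_mul_cancel hcard,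
    one_mul]
  have hmain := sq_sum_quadraticChar_eq hF2 hc0 hc1
  rw [one_div, inv_inv, add_sub_cancel_right, ← sum_surface_eq lam hlam0] at hmain
  have hχ : quadraticChar F (lam + 1) * quadraticChar F (lam + 1)⁻¹ = 1 := by
    rw [← map_mul, mul_inv_cancel₀ hl, map_one]
  have hint := congrArg (fun z ↦ quadraticChar F (lam + 1) * (z - Fintype.card F)) hmain
  simp only [add_sub_cancel_left, ← mul_assoc, hχ, one_mul] at hint
  rw [one_div]
  have hcast := congrArg (Int.cast : ℤ → ℂ) hint
  push_cast at hcast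
  rw [hcast]
  simp_rw [← map_mul ψ, hψ_apply]
end
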